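/- Suppose a group G acts geometrically on a CAT(0) space X with fixed basepoint x₀ and |∂X| > 2. Assume there exists a constant M > 0 such that for any α, β ∈ ∂X with α ≠ β, there exist a sequence (g_i) ⊂ G and a point y₀ ∈ X such that d(y₀, g_i x₀) → ∞ as i → ∞ and, for every i, the image of the geodesic ray ξ_{g_i x₀, α} meets the closed ball B(y₀, M) and the image of ξ_{g_i x₀, β} meets B(y₀, M) (where ξ_{g_i x₀, α} and ξ_{g_i x₀, β} are the geodesic rays issuing from g_i x₀ representing α and β respectively). Then the boundary ∂X is a scrambled set. -/

import Mathlib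

/-!
Throughout, `ξ_{x,α}` denotes `B.ray x α`. Two consequences of convexity of the metric of a CAT(0)
space carry the proof. Rays from a common point spread at least linearly
(`ray_dist_le_of_start_eq`), and the distance between asymptotic rays, at equal times, never
exceeds its initial value (`dist_le_of_asymptotic`).

*Lower limit.* Let `(gᵢ)` and `y₀` be as in the hypothesis. The rays from `gᵢ x₀` to `α` and `β`
pass within `M` of `y₀`, hence are within `4M` of each other at a time `tᵢ → ∞`. By linear spreading
they are within `4Ms / tᵢ` at each earlier time `s`. Translating by `gᵢ⁻¹` gives the same for the
rays from `x₀` to `gᵢ⁻¹ α` and `gᵢ⁻¹ β`, so `d(gᵢ⁻¹ α, gᵢ⁻¹ β) → 0` by dominated convergence,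
while `gᵢ⁻¹` leaves every finite subset of `G` (`tendsto_bdist_zero`).

*Upper limit.* Suppose `d(gα, gβ) → 0` along the cofinite filter. By cocompactness there is
a constant `C` such that for every `L` and every point `p` far enough from `x₀`, the rays from
`p` to `α` and to `β` are at distance at most `C` at time `L`. Let
`D(t) = d(ξ_{x₀,α}(t), ξ_{x₀,β}(t))`. Restarting both rays at `p = ξ_{x₀,α}(t)` gives
`D(t + L) ≤ D(t) + C` for large `t` (`dist_ray_add_le`), so `D` has asymptotic slope at most `C / L`
for every `L`. But linear spreading makes `D(t) / t` nondecreasing, so `D = 0` and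
`α = β` (`limsup_bdist_pos`).
-/

/-- `γ` parametrizes a geodesic segment from `x` to `y` by arc length:
it is an isometric embedding of `[0, dist x y]` with `γ 0 = x` and `γ (dist x y) = y`. -/
def IsGeodesicFrom {X : Type*} [MetricSpace X] (γ : ℝ → X) (x y : X) : Prop :=
  γ 0 = x ∧ γ (dist x y) = y ∧
    ∀ s ∈ Set.Icc (0 : ℝ) (dist x y), ∀ t ∈ Set.Icc (0 : ℝ) (dist x y),
      dist (γ s) (γ t) = |s - t|

/-- A geodesic space: every pair of points is joined by a geodesic. -/
def GeodesicSpace (X : Type*) [MetricSpace X] : Prop :=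
  ∀ x y : X, ∃ γ : ℝ → X, IsGeodesicFrom γ x y

/-- The comparison point in the Euclidean plane: the point at arc-length parameter `s`
on the segment from `p` to `q`, where `D` is the length of that segment. -/
noncomputable def cmpPt (p q : EuclideanSpace ℝ (Fin 2)) (D s : ℝ) :
    EuclideanSpace ℝ (Fin 2) :=
  p + (s / D) • (q - p)

/-- A CAT(0) space: a geodesic space in which every geodesic triangle satisfies the
CAT(0) comparison inequality with respect to a comparison triangle in the Euclidean
plane `ℝ²` with the same side lengths. -/
def CAT0 (X : Type*) [MetricSpace X] : Prop :=
  GeodesicSpace X ∧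
    ∀ (p q r : X) (γ γ' : ℝ → X), IsGeodesicFrom γ p q → IsGeodesicFrom γ' p r →
      ∀ pc qc rc : EuclideanSpace ℝ (Fin 2),
        dist pc qc = dist p q → dist pc rc = dist p r → dist qc rc = dist q r →
        ∀ s ∈ Set.Icc (0 : ℝ) (dist p q), ∀ t ∈ Set.Icc (0 : ℝ) (dist p r),
          dist (γ s) (γ' t) ≤ dist (cmpPt pc qc (dist p q) s) (cmpPt pc rc (dist p r) t)

/-- A geodesic ray: an isometric embedding of `[0, ∞)`. -/
def IsGeodesicRay {X : Type*} [MetricSpace X] (ξ : ℝ → X) : Prop :=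
  ∀ s ∈ Set.Ici (0 : ℝ), ∀ t ∈ Set.Ici (0 : ℝ), dist (ξ s) (ξ t) = |s - t|

/-- Two rays are asymptotic if they are at bounded distance from each other. -/
def Asymptotic {X : Type*} [MetricSpace X] (ξ ζ : ℝ → X) : Prop :=
  ∃ C : ℝ, ∀ t ≥ (0 : ℝ), dist (ξ t) (ζ t) ≤ C

/-- The action of `G` on `X` is by isometries. -/
def IsometricAction (G X : Type*) [Group G] [MetricSpace X] [MulAction G X] : Prop :=
  ∀ (g : G) (x y : X), dist (g • x) (g • y) = dist x y

/-- The action of `G` on `X` is (metrically) proper. -/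
def ProperAction (G X : Type*) [Group G] [MetricSpace X] [MulAction G X] : Prop :=
  ∀ (x : X) (R : ℝ), {g : G | dist x (g • x) ≤ R}.Finite

/-- The action of `G` on `X` is cocompact: some (hence any) orbit is coarsely dense. -/
def CocompactAction (G X : Type*) [Group G] [MetricSpace X] [MulAction G X] : Prop :=
  ∀ x : X, ∃ R > (0 : ℝ), ∀ y : X, ∃ g : G, dist y (g • x) ≤ R

/-- A geometric action: proper and cocompact, by isometries. -/
def GeometricAction (G X : Type*) [Group G] [MetricSpace X] [MulAction G X] : Prop :=
  IsometricAction G X ∧ ProperAction G X ∧ CocompactAction G X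

/-- A bundled presentation of the boundary `∂X` of a proper CAT(0) space `X`,
together with the induced action of `G`.  The type `Bd` plays the role of `∂X`:
`ray x α` is the unique geodesic ray issuing from `x` in the asymptotic class `α`,
every geodesic ray is asymptotic to exactly one such ray, and the `G`-action on `Bd`
is the one induced by the action on rays, `g • [ξ] = [g ∘ ξ]`. -/
structure BoundaryStruct (G X Bd : Type*) [Group G] [MetricSpace X]
    [MulAction G X] [MulAction G Bd] where
  ray : X → Bd → ℝ → X
  isRay : ∀ (x : X) (α : Bd), IsGeodesicRay (ray x α)
  ray_start : ∀ (x : X) (α : Bd), ray x α 0 = x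
  ray_asymp : ∀ (x y : X) (α : Bd), Asymptotic (ray x α) (ray y α)
  ray_inj : ∀ (x : X) (α β : Bd), Asymptotic (ray x α) (ray x β) → α = β
  ray_surj : ∀ ξ : ℝ → X, IsGeodesicRay ξ → ∃ α : Bd, Asymptotic ξ (ray (ξ 0) α)
  equivariant : ∀ (g : G) (x : X) (α : Bd) (t : ℝ), g • ray x α t = ray (g • x) (g • α) t

/-- The metric `d_{∂X}` on the boundary with respect to the basepoint `x₀`:
`d_{∂X}(α,β) = Σ_{i=1}^∞ min { d(ξ_{x₀,α}(i), ξ_{x₀,β}(i)), 2⁻ⁱ }`. -/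
noncomputable def bdist {G X Bd : Type*} [Group G] [MetricSpace X]
    [MulAction G X] [MulAction G Bd] (B : BoundaryStruct G X Bd) (x₀ : X)
    (α β : Bd) : ℝ :=
  ∑' i : ℕ, min (dist (B.ray x₀ α (i + 1)) (B.ray x₀ β (i + 1))) ((1 : ℝ) / 2 ^ (i + 1))

/-- The boundary is a scrambled set: for all distinct `α, β ∈ ∂X`,
`limsup { d_{∂X}(gα, gβ) : g ∈ G } > 0` and `liminf { d_{∂X}(gα, gβ) : g ∈ G } = 0`
(limit superior/inferior being taken along the cofinite filter on `G`). -/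
def IsScrambled {G X Bd : Type*} [Group G] [MetricSpace X]
    [MulAction G X] [MulAction G Bd] (B : BoundaryStruct G X Bd) (x₀ : X) : Prop :=
  ∀ α β : Bd, α ≠ β →
    0 < Filter.limsup (fun g : G => bdist B x₀ (g • α) (g • β)) Filter.cofinite ∧
    Filter.liminf (fun g : G => bdist B x₀ (g • α) (g • β)) Filter.cofinite = 0

/-- The boundary has more than two points. -/
def MoreThanTwo (Bd : Type*) : Prop :=
  ∃ a b c : Bd, a ≠ b ∧ a ≠ c ∧ b ≠ c

/-! ### Convexity of the metric in a CAT(0) space -/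

lemma exists_comparison_triangle {a b c : ℝ} (ha : 0 ≤ a) (hb : 0 ≤ b) (hc : 0 ≤ c)
    (h₁ : c ≤ a + b) (h₂ : a ≤ b + c) (h₃ : b ≤ a + c) :
    ∃ p q r : EuclideanSpace ℝ (Fin 2), dist p q = a ∧ dist p r = b ∧ dist q r = c := by
  rcases ha.eq_or_lt with rfl | ha'
  · have hbc : b = c := by linarith
    subst hbc
    refine ⟨0, 0, !₂[b, 0], by simp, ?_, ?_⟩ <;>
      simp [EuclideanSpace.dist_eq, Real.dist_eq, Fin.sum_univ_two, Real.sqrt_sq hb]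
  · -- `x` is the first coordinate of the third vertex, given by the law of cosines.
    set x : ℝ := (a ^ 2 + b ^ 2 - c ^ 2) / (2 * a) with hx
    have hxa : 2 * a * x = a ^ 2 + b ^ 2 - c ^ 2 := by rw [hx]; field_simp
    have hx_le : x ≤ b := by
      rw [hx, div_le_iff₀ (by positivity)]
      nlinarith [mul_nonneg (sub_nonneg.2 h₂) (sub_nonneg.2 h₃)]
    have hx_ge : -b ≤ x := by
      rw [hx, le_div_iff₀ (by positivity)]
      nlinarith [mul_nonneg (sub_nonneg.2 h₁) (by linarith : 0 ≤ a + b + c)]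
    have hy : Real.sqrt (b ^ 2 - x ^ 2) ^ 2 = b ^ 2 - x ^ 2 :=
      Real.sq_sqrt (by nlinarith)
    refine ⟨0, !₂[a, 0], !₂[x, Real.sqrt (b ^ 2 - x ^ 2)], ?_, ?_, ?_⟩
    · simp [EuclideanSpace.dist_eq, Real.dist_eq, Fin.sum_univ_two, Real.sqrt_sq ha]
    · simp [EuclideanSpace.dist_eq, Real.dist_eq, Fin.sum_univ_two, hy,
        Real.sqrt_sq hb]
    · rw [EuclideanSpace.dist_eq, Real.sqrt_eq_iff_eq_sq (by positivity) hc]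
      simp only [Real.dist_eq, Fin.sum_univ_two, sq_abs]
      simp
      nlinarith

/-- Geodesics issuing from a common point spread at least linearly. -/
lemma CAT0.dist_le_mul {X : Type*} [MetricSpace X] (hCAT : CAT0 X) {p q r : X} {γ γ' : ℝ → X}
    (hγ : IsGeodesicFrom γ p q) (hγ' : IsGeodesicFrom γ' p r) {l : ℝ} (hl : l ∈ Set.Icc (0 : ℝ) 1) :
    dist (γ (l * dist p q)) (γ' (l * dist p r)) ≤ l * dist q r := by
  obtain ⟨pc, qc, rc, h₁, h₂, h₃⟩ := exists_comparison_triangle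
    (dist_nonneg (x := p) (y := q)) (dist_nonneg (x := p) (y := r)) (dist_nonneg (x := q) (y := r))
    (dist_triangle_left q r p) (dist_triangle_right p q r) (dist_triangle p q r)
  have hmem : ∀ z : X, l * dist p z ∈ Set.Icc (0 : ℝ) (dist p z) := fun z =>
    ⟨mul_nonneg hl.1 dist_nonneg, mul_le_of_le_one_left dist_nonneg hl.2⟩
  -- A degenerate side (where the parameter `s / D` is `0`) has coinciding vertices.
  have hcmp : ∀ (z : X) (zc : EuclideanSpace ℝ (Fin 2)), dist pc zc = dist p z →
      cmpPt pc zc (dist p z) (l * dist p z) = pc + l • (zc - pc) := by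
    intro z zc hz
    unfold cmpPt
    by_cases h0 : dist p z = 0
    · rw [h0, dist_eq_zero] at hz
      simp [hz]
    · rw [mul_div_assoc, div_self h0, mul_one]
  refine (hCAT.2 p q r γ γ' hγ hγ' pc qc rc h₁ h₂ h₃ _ (hmem q) _ (hmem r)).trans ?_
  rw [hcmp q qc h₁, hcmp r rc h₂, dist_add_left, dist_smul₀, dist_sub_right, h₃,
    Real.norm_of_nonneg hl.1]

lemma IsGeodesicFrom.reverse {X : Type*} [MetricSpace X] {γ : ℝ → X} {x y : X}
    (h : IsGeodesicFrom γ x y) : IsGeodesicFrom (fun t => γ (dist x y - t)) y x := by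
  obtain ⟨h0, h1, h2⟩ := h
  refine ⟨by simpa using h1, by simpa [dist_comm y x] using h0, fun s hs t ht => ?_⟩
  rw [dist_comm y x] at hs ht
  rw [h2 _ ⟨by linarith [hs.2], by linarith [hs.1]⟩ _ ⟨by linarith [ht.2], by linarith [ht.1]⟩,
    abs_sub_comm s t]
  congr 1
  ring

/-! ### Geodesic rays -/

lemma IsGeodesicRay.dist_zero {X : Type*} [MetricSpace X] {ξ : ℝ → X} (h : IsGeodesicRay ξ)
    {T : ℝ} (hT : 0 ≤ T) : dist (ξ 0) (ξ T) = T := by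
  rw [h 0 Set.self_mem_Ici T hT, zero_sub, abs_neg, abs_of_nonneg hT]

lemma IsGeodesicRay.isGeodesicFrom {X : Type*} [MetricSpace X] {ξ : ℝ → X} (h : IsGeodesicRay ξ)
    {T : ℝ} (hT : 0 ≤ T) : IsGeodesicFrom ξ (ξ 0) (ξ T) := by
  refine ⟨rfl, by rw [h.dist_zero hT], fun s hs t ht => h s hs.1 t ht.1⟩

lemma IsGeodesicRay.shift {X : Type*} [MetricSpace X] {ξ : ℝ → X} (h : IsGeodesicRay ξ)
    {T : ℝ} (hT : 0 ≤ T) : IsGeodesicRay (fun t => ξ (T + t)) := by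
  intro s hs t ht
  rw [h _ (add_nonneg hT hs) _ (add_nonneg hT ht), add_sub_add_left_eq_sub]

/-- Rays issuing from a common point spread at least linearly. -/
lemma CAT0.ray_dist_le_of_start_eq {X : Type*} [MetricSpace X] (hCAT : CAT0 X) {ξ ζ : ℝ → X}
    (hξ : IsGeodesicRay ξ) (hζ : IsGeodesicRay ζ) (h0 : ξ 0 = ζ 0) {s t : ℝ} (hs : 0 ≤ s)
    (hst : s ≤ t) (ht : 0 < t) : dist (ξ s) (ζ s) ≤ s / t * dist (ξ t) (ζ t) := by
  have h := hCAT.dist_le_mul (hξ.isGeodesicFrom ht.le) (h0 ▸ hζ.isGeodesicFrom ht.le)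
    (l := s / t) ⟨by positivity, (div_le_one ht).2 hst⟩
  rwa [hξ.dist_zero ht.le, h0, hζ.dist_zero ht.le, div_mul_cancel₀ s ht.ne'] at h

/-- Convexity of the distance between two rays, obtained by cutting the quadrilateral
`ξ 0, ξ T, ζ T, ζ 0` along the diagonal from `ξ 0` to `ζ T`. -/
lemma CAT0.ray_dist_convex {X : Type*} [MetricSpace X] (hCAT : CAT0 X) {ξ ζ : ℝ → X}
    (hξ : IsGeodesicRay ξ) (hζ : IsGeodesicRay ζ) {t T : ℝ} (ht : 0 ≤ t) (htT : t ≤ T)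
    (hT : 0 < T) :
    dist (ξ t) (ζ t) ≤ (1 - t / T) * dist (ξ 0) (ζ 0) + t / T * dist (ξ T) (ζ T) := by
  obtain ⟨η, hη⟩ := hCAT.1 (ξ 0) (ζ T)
  have hl0 : 0 ≤ t / T := by positivity
  have hl1 : t / T ≤ 1 := (div_le_one hT).2 htT
  have h1 := hCAT.dist_le_mul (hξ.isGeodesicFrom hT.le) hη (l := t / T) ⟨hl0, hl1⟩
  have h2 := hCAT.dist_le_mul hη.reverse (hζ.isGeodesicFrom hT.le).reverse (l := 1 - t / T)
    ⟨by linarith, by linarith⟩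
  rw [hξ.dist_zero hT.le, div_mul_cancel₀ t hT.ne'] at h1
  rw [dist_comm (ζ T) (ξ 0), dist_comm (ζ T) (ζ 0), hζ.dist_zero hT.le] at h2
  have e1 : dist (ξ 0) (ζ T) - (1 - t / T) * dist (ξ 0) (ζ T) = t / T * dist (ξ 0) (ζ T) := by ring
  have e2 : T - (1 - t / T) * T = t := by field_simp; ring
  simp only [e1, e2] at h2
  linarith [dist_triangle (ξ t) (η (t / T * dist (ξ 0) (ζ T))) (ζ t)]

/-- Asymptotic rays do not diverge: their distance is a bounded convex function of time. -/
lemma CAT0.dist_le_of_asymptotic {X : Type*} [MetricSpace X] (hCAT : CAT0 X) {ξ ζ : ℝ → X}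
    (hξ : IsGeodesicRay ξ) (hζ : IsGeodesicRay ζ) (h : Asymptotic ξ ζ) {t : ℝ} (ht : 0 ≤ t) :
    dist (ξ t) (ζ t) ≤ dist (ξ 0) (ζ 0) := by
  obtain ⟨C, hC⟩ := h
  have hlim : Filter.Tendsto (fun T : ℝ => dist (ξ 0) (ζ 0) + t / T * C) Filter.atTop
      (nhds (dist (ξ 0) (ζ 0) + 0 * C)) :=
    tendsto_const_nhds.add ((tendsto_const_nhds.div_atTop Filter.tendsto_id).mul_const C)
  rw [zero_mul, add_zero] at hlim
  refine ge_of_tendsto hlim ?_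
  filter_upwards [Filter.eventually_ge_atTop t, Filter.eventually_gt_atTop 0] with T hT hT0
  have hl0 : 0 ≤ t / T := by positivity
  have h1 := hCAT.ray_dist_convex hξ hζ ht hT hT0
  nlinarith [mul_le_mul_of_nonneg_left (hC T hT0.le) hl0,
    mul_nonneg hl0 (dist_nonneg (x := ξ 0) (y := ζ 0))]

section Boundary

variable {G X Bd : Type*} [Group G] [MetricSpace X] [MulAction G X] [MulAction G Bd]

/-- The tail of the ray from `x` to `α` after time `T` and the ray from `p` to `α` are asymptotic,
so they stay as close as they start. -/
lemma BoundaryStruct.dist_ray_shift_le (B : BoundaryStruct G X Bd) (hCAT : CAT0 X) (p x : X)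
    (α : Bd) {T s : ℝ} (hT : 0 ≤ T) (hs : 0 ≤ s) :
    dist (B.ray p α s) (B.ray x α (T + s)) ≤ dist p (B.ray x α T) := by
  have hasy : Asymptotic (B.ray p α) (fun t => B.ray x α (T + t)) := by
    obtain ⟨C, hC⟩ := B.ray_asymp p x α
    refine ⟨C + T, fun t ht => ?_⟩
    have h1 := B.isRay x α t ht (T + t) (add_nonneg hT ht)
    rw [abs_sub_comm, add_sub_cancel_right, abs_of_nonneg hT] at h1
    linarith [hC t ht, dist_triangle (B.ray p α t) (B.ray x α t) (B.ray x α (T + t))]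
  simpa [B.ray_start] using
    hCAT.dist_le_of_asymptotic (B.isRay p α) ((B.isRay x α).shift hT) hasy hs

lemma BoundaryStruct.dist_ray_le (B : BoundaryStruct G X Bd) (hCAT : CAT0 X) (p x : X)
    (α : Bd) {s : ℝ} (hs : 0 ≤ s) : dist (B.ray p α s) (B.ray x α s) ≤ dist p x := by
  simpa [B.ray_start] using B.dist_ray_shift_le hCAT p x α le_rfl hs

lemma BoundaryStruct.dist_ray_inv_smul (B : BoundaryStruct G X Bd) (hiso : IsometricAction G X)
    (g : G) (x : X) (α β : Bd) (s : ℝ) :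
    dist (B.ray x (g⁻¹ • α) s) (B.ray x (g⁻¹ • β) s) =
      dist (B.ray (g • x) α s) (B.ray (g • x) β s) := by
  rw [← hiso g, B.equivariant, B.equivariant, smul_inv_smul, smul_inv_smul]

/-! ### The boundary metric -/

lemma hasSum_geometric_tail : HasSum (fun i : ℕ => (1 : ℝ) / 2 ^ (i + 1)) 1 := by
  have h := hasSum_geometric_two.mul_left (1 / 2 : ℝ)
  have e : (fun i : ℕ => (1 : ℝ) / 2 ^ (i + 1)) = fun i => 1 / 2 * (1 / 2) ^ i := by
    funext i
    rw [← pow_succ', one_div_pow]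
  rwa [one_div_mul_cancel (two_ne_zero' ℝ), ← e] at h

lemma bdist_term_nonneg (B : BoundaryStruct G X Bd) (x₀ : X) (α β : Bd) (i : ℕ) :
    0 ≤ min (dist (B.ray x₀ α (i + 1)) (B.ray x₀ β (i + 1))) ((1 : ℝ) / 2 ^ (i + 1)) :=
  le_min dist_nonneg (by positivity)

lemma bdist_summable (B : BoundaryStruct G X Bd) (x₀ : X) (α β : Bd) :
    Summable fun i : ℕ =>
      min (dist (B.ray x₀ α (i + 1)) (B.ray x₀ β (i + 1))) ((1 : ℝ) / 2 ^ (i + 1)) :=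
  Summable.of_nonneg_of_le (bdist_term_nonneg B x₀ α β) (fun _ => min_le_right _ _)
    hasSum_geometric_tail.summable

lemma bdist_nonneg (B : BoundaryStruct G X Bd) (x₀ : X) (α β : Bd) : 0 ≤ bdist B x₀ α β :=
  tsum_nonneg (bdist_term_nonneg B x₀ α β)

lemma bdist_le_one (B : BoundaryStruct G X Bd) (x₀ : X) (α β : Bd) : bdist B x₀ α β ≤ 1 :=
  hasSum_geometric_tail.tsum_eq ▸ (bdist_summable B x₀ α β).tsum_le_tsum
    (fun _ => min_le_right _ _) hasSum_geometric_tail.summable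

/-- If `α` and `β` are close in the boundary metric, the rays to them are still close at
time `n + 1`. -/
lemma dist_ray_lt_of_bdist_lt (B : BoundaryStruct G X Bd) (x₀ : X) (α β : Bd) (n : ℕ)
    (h : bdist B x₀ α β < 1 / 2 ^ (n + 1)) :
    dist (B.ray x₀ α (n + 1)) (B.ray x₀ β (n + 1)) < 1 := by
  have h1 := ((bdist_summable B x₀ α β).le_tsum n
    (fun j _ => bdist_term_nonneg B x₀ α β j)).trans_lt h
  rcases min_lt_iff.1 h1 with h2 | h2
  · refine h2.trans_le ?_
    rw [div_le_one (by positivity)]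
    exact one_le_pow₀ (by norm_num)
  · exact absurd h2 (lt_irrefl _)

/-! ### The lower limit -/

/-- If the rays from `z` to `α` and `β` both meet the ball `B(y, M)`, they are within `4M` of each
other at some time `t ≥ d(y, z) - M`; linear spreading then bounds their distance at every earlier
time `s`. -/
lemma dist_ray_le_of_meet (B : BoundaryStruct G X Bd) (hCAT : CAT0 X) {z y : X} {M : ℝ}
    {α β : Bd}
    (hα : (B.ray z α '' Set.Ici (0 : ℝ) ∩ Metric.closedBall y M).Nonempty)
    (hβ : (B.ray z β '' Set.Ici (0 : ℝ) ∩ Metric.closedBall y M).Nonempty)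
    {s : ℝ} (hs : 0 < s) (hsM : s + M ≤ dist y z) :
    dist (B.ray z α s) (B.ray z β s) ≤ s / (dist y z - M) * (4 * M) := by
  obtain ⟨_, ⟨t, ht, rfl⟩, hty⟩ := hα
  obtain ⟨_, ⟨u, hu, rfl⟩, huy⟩ := hβ
  rw [Metric.mem_closedBall] at hty huy
  have htz : dist z (B.ray z α t) = t := by
    simpa [B.ray_start] using (B.isRay z α).dist_zero ht
  have huz : dist z (B.ray z β u) = u := by
    simpa [B.ray_start] using (B.isRay z β).dist_zero hu
  have hM : 0 ≤ M := dist_nonneg.trans hty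
  have hDt : dist y z - M ≤ t := by
    linarith [dist_triangle_left y z (B.ray z α t), dist_comm z (B.ray z α t)]
  have htu : dist (B.ray z α t) (B.ray z β u) ≤ 2 * M := by
    linarith [dist_triangle_right (B.ray z α t) (B.ray z β u) y]
  -- The times `t` and `u` are the distances from `z` to the two points of the ball.
  have habs : |u - t| ≤ 2 * M := by
    rw [abs_le]
    constructor
    · linarith [dist_triangle_right z (B.ray z α t) (B.ray z β u)]
    · linarith [dist_triangle z (B.ray z α t) (B.ray z β u)]
  have h4 : dist (B.ray z α t) (B.ray z β t) ≤ 4 * M := by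
    have := B.isRay z β u hu t ht
    linarith [dist_triangle (B.ray z α t) (B.ray z β u) (B.ray z β t)]
  have hst : s ≤ t := by linarith
  refine (hCAT.ray_dist_le_of_start_eq (B.isRay z α) (B.isRay z β)
    (by rw [B.ray_start, B.ray_start]) hs.le hst (hs.trans_le hst)).trans ?_
  have : 0 < dist y z - M := by linarith
  gcongr

lemma tendsto_bdist_zero (hCAT : CAT0 X) (hiso : IsometricAction G X)
    (B : BoundaryStruct G X Bd) (x₀ : X) {M : ℝ} {α β : Bd} {g : ℕ → G} {y₀ : X}
    (hg : Filter.Tendsto (fun i => dist y₀ (g i • x₀)) Filter.atTop Filter.atTop)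
    (hmeet : ∀ i : ℕ,
      (B.ray (g i • x₀) α '' Set.Ici (0 : ℝ) ∩ Metric.closedBall y₀ M).Nonempty ∧
      (B.ray (g i • x₀) β '' Set.Ici (0 : ℝ) ∩ Metric.closedBall y₀ M).Nonempty) :
    Filter.Tendsto (fun i => bdist B x₀ ((g i)⁻¹ • α) ((g i)⁻¹ • β)) Filter.atTop (nhds 0) := by
  have key : ∀ k : ℕ, Filter.Tendsto (fun i =>
      min (dist (B.ray x₀ ((g i)⁻¹ • α) (k + 1)) (B.ray x₀ ((g i)⁻¹ • β) (k + 1)))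
        ((1 : ℝ) / 2 ^ (k + 1))) Filter.atTop (nhds 0) := by
    intro k
    have hlim : Filter.Tendsto (fun i => ((k : ℝ) + 1) / (dist y₀ (g i • x₀) - M) * (4 * M))
        Filter.atTop (nhds (0 * (4 * M))) :=
      (tendsto_const_nhds.div_atTop
        (Filter.tendsto_atTop_add_const_right _ (-M) hg)).mul_const _
    rw [zero_mul] at hlim
    refine squeeze_zero' (Filter.Eventually.of_forall fun i => bdist_term_nonneg B x₀ _ _ k) ?_ hlim
    filter_upwards [hg.eventually_ge_atTop ((k : ℝ) + 1 + M)] with i hi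
    refine (min_le_left _ _).trans ?_
    rw [B.dist_ray_inv_smul hiso]
    exact dist_ray_le_of_meet B hCAT (hmeet i).1 (hmeet i).2 (by positivity) hi
  have h := tendsto_tsum_of_dominated_convergence hasSum_geometric_tail.summable key
    (Filter.Eventually.of_forall fun i k => by
      rw [Real.norm_of_nonneg (bdist_term_nonneg B x₀ _ _ k)]
      exact min_le_right _ _)
  simpa [bdist] using h

lemma tendsto_inv_cofinite {x₀ y₀ : X} {g : ℕ → G}
    (hg : Filter.Tendsto (fun i => dist y₀ (g i • x₀)) Filter.atTop Filter.atTop) :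
    Filter.Tendsto (fun i => (g i)⁻¹) Filter.atTop Filter.cofinite := by
  refine Filter.le_cofinite_iff_eventually_ne.2 fun h => Filter.eventually_map.2 ?_
  filter_upwards [hg.eventually_gt_atTop (dist y₀ (h⁻¹ • x₀))] with i hi he
  rw [← he, inv_inv] at hi
  exact lt_irrefl _ hi

/-! ### The upper limit -/

/-- With `D(t) = d(ξ_{x,α}(t), ξ_{x,β}(t))` and `p = ξ_{x,α}(t)`: the increment `D(t + L) - D(t)`
is at most the distance at time `L` between the rays from `p` to `α` and to `β`. -/
lemma dist_ray_add_le (hCAT : CAT0 X) (B : BoundaryStruct G X Bd) (x : X) (α β : Bd) {t L : ℝ}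
    (ht : 0 ≤ t) (hL : 0 ≤ L) :
    dist (B.ray x α (t + L)) (B.ray x β (t + L)) ≤ dist (B.ray x α t) (B.ray x β t) +
      dist (B.ray (B.ray x α t) α L) (B.ray (B.ray x α t) β L) := by
  have h1 := B.dist_ray_shift_le hCAT (B.ray x α t) x α ht hL
  have h2 := B.dist_ray_shift_le hCAT (B.ray x α t) x β ht hL
  rw [dist_self] at h1
  linarith [dist_triangle4 (B.ray x α (t + L)) (B.ray (B.ray x α t) α L)
      (B.ray (B.ray x α t) β L) (B.ray x β (t + L)),
    dist_comm (B.ray (B.ray x α t) α L) (B.ray x α (t + L))]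

/-- If `d(gα, gβ)` is eventually small, then far out in `X` all rays to `α` and `β` that start at
the same point are still close at time `n + 1`. -/
lemma exists_forall_dist_ray_le (hCAT : CAT0 X) (hiso : IsometricAction G X)
    (B : BoundaryStruct G X Bd) {x₀ : X} {α β : Bd} {R : ℝ}
    (hR : ∀ y : X, ∃ g : G, dist y (g • x₀) ≤ R) (n : ℕ)
    (h : ∀ᶠ g : G in Filter.cofinite, bdist B x₀ (g • α) (g • β) < 1 / 2 ^ (n + 1)) :
    ∃ T : ℝ, ∀ p : X, T < dist x₀ p →
      dist (B.ray p α (n + 1)) (B.ray p β (n + 1)) ≤ 2 * R + 1 := by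
  obtain ⟨K, hK⟩ := (Set.Finite.image (fun g : G => dist x₀ (g⁻¹ • x₀)) h).bddAbove
  refine ⟨K + R, fun p hp => ?_⟩
  obtain ⟨g, hg⟩ := hR p
  have hgood : bdist B x₀ (g⁻¹ • α) (g⁻¹ • β) < 1 / 2 ^ (n + 1) := by
    by_contra hbad
    have h1 := hK ⟨g⁻¹, hbad, rfl⟩
    simp only [inv_inv] at h1
    linarith [dist_triangle_right x₀ p (g • x₀)]
  have h1 := dist_ray_lt_of_bdist_lt B x₀ _ _ n hgood
  rw [B.dist_ray_inv_smul hiso] at h1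
  have hn : (0 : ℝ) ≤ n + 1 := by positivity
  have h2 := B.dist_ray_le hCAT p (g • x₀) α hn
  have h3 := B.dist_ray_le hCAT p (g • x₀) β hn
  linarith [dist_triangle4 (B.ray p α (n + 1)) (B.ray (g • x₀) α (n + 1))
    (B.ray (g • x₀) β (n + 1)) (B.ray p β (n + 1)),
    dist_comm (B.ray p β (n + 1)) (B.ray (g • x₀) β (n + 1))]

lemma limsup_bdist_pos (hCAT : CAT0 X) (hiso : IsometricAction G X) (hcoc : CocompactAction G X)
    (B : BoundaryStruct G X Bd) (x₀ : X) {α β : Bd} (hαβ : α ≠ β) :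
    0 < Filter.limsup (fun g : G => bdist B x₀ (g • α) (g • β)) Filter.cofinite := by
  by_contra! hlim
  obtain ⟨R, hR0, hR⟩ := hcoc x₀
  set D : ℝ → ℝ := fun t => dist (B.ray x₀ α t) (B.ray x₀ β t) with hD
  obtain ⟨t₀, ht₀, hDt₀⟩ : ∃ t₀ : ℝ, 0 ≤ t₀ ∧ 0 < D t₀ := by
    by_contra! hcon
    exact hαβ (B.ray_inj x₀ α β ⟨0, hcon⟩)
  have ht₀' : 0 < t₀ := by
    refine ht₀.lt_of_ne fun h0 => ?_
    simp [hD, ← h0, B.ray_start] at hDt₀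
  -- The step length `n + 1` makes the slope `(2R + 1) / (n + 1)` less than `D t₀ / t₀`.
  obtain ⟨n, hn⟩ := exists_nat_gt ((2 * R + 1) * t₀ / D t₀)
  have hslope : (2 * R + 1) * t₀ < D t₀ * (n + 1) := by
    rw [div_lt_iff₀ hDt₀] at hn
    linarith
  have hbdd : Filter.IsBoundedUnder (· ≤ ·) Filter.cofinite
      (fun g : G => bdist B x₀ (g • α) (g • β)) :=
    Filter.isBoundedUnder_of ⟨1, fun g => bdist_le_one B x₀ _ _⟩
  obtain ⟨T, hT⟩ := exists_forall_dist_ray_le hCAT hiso B hR n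
    (Filter.eventually_lt_of_limsup_lt (hlim.trans_lt (by positivity)) hbdd)
  set S : ℝ := max (T + 1) t₀ with hS
  have hS0 : 0 < S := ht₀'.trans_le (le_max_right _ _)
  have hup : ∀ k : ℕ, D (S + k * (n + 1)) ≤ D S + k * (2 * R + 1) := by
    intro k
    induction k with
    | zero => simp
    | succ k ih =>
      have hk : (0 : ℝ) ≤ k * (n + 1) := by positivity
      have hfar : T < dist x₀ (B.ray x₀ α (S + k * (n + 1))) := by
        have h1 := (B.isRay x₀ α).dist_zero (T := S + k * (n + 1)) (by linarith)
        rw [B.ray_start] at h1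
        linarith [le_max_left (T + 1) t₀]
      have h1 := dist_ray_add_le hCAT B x₀ α β (t := S + k * (n + 1)) (L := n + 1)
        (by linarith) (by positivity)
      have h2 := hT _ hfar
      have e : S + ((k + 1 : ℕ) : ℝ) * (n + 1) = S + k * (n + 1) + (n + 1) := by
        push_cast; ring
      simp only [hD] at ih ⊢
      rw [e]
      push_cast
      linarith
  have hlow : ∀ t, t₀ ≤ t → D t₀ * t ≤ t₀ * D t := by
    intro t ht
    have htpos := ht₀'.trans_le ht
    have h1 := hCAT.ray_dist_le_of_start_eq (B.isRay x₀ α) (B.isRay x₀ β)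
      (by rw [B.ray_start, B.ray_start]) ht₀ ht htpos
    rwa [div_mul_eq_mul_div, le_div_iff₀ htpos] at h1
  obtain ⟨k, hk⟩ := exists_nat_gt (t₀ * D S / (D t₀ * (n + 1) - (2 * R + 1) * t₀))
  rw [div_lt_iff₀ (by linarith)] at hk
  have hk0 : (0 : ℝ) ≤ k * (n + 1) := by positivity
  have h1 := hlow (S + k * (n + 1)) (by linarith [le_max_right (T + 1) t₀])
  have h2 := mul_le_mul_of_nonneg_left (hup k) ht₀
  nlinarith [mul_pos hDt₀ hS0]

end Boundary

/-- Theorem 3.2, the key theorem. Suppose `G` acts geometrically on a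
CAT(0) space `X` with basepoint `x₀` and `|∂X| > 2`.  If there is a constant `M > 0` such
that for all distinct `α, β ∈ ∂X` there are a sequence `(gᵢ) ⊆ G` and a point `y₀ ∈ X`
with `d(y₀, gᵢx₀) → ∞` and such that for every `i` the images of the geodesic rays
`ξ_{gᵢx₀,α}` and `ξ_{gᵢx₀,β}` meet the closed ball `B(y₀, M)`, then `∂X` is a
scrambled set. -/
theorem scrambled_of_rays_meet_ball {G X Bd : Type*} [Group G] [MetricSpace X]
    [MulAction G X] [MulAction G Bd]
    (hCAT : CAT0 X) (hgeo : GeometricAction G X)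
    (B : BoundaryStruct G X Bd) (x₀ : X) (hcard : MoreThanTwo Bd)
    (hM : ∃ M > (0 : ℝ), ∀ α β : Bd, α ≠ β →
      ∃ (g : ℕ → G) (y₀ : X),
        Filter.Tendsto (fun i => dist y₀ (g i • x₀)) Filter.atTop Filter.atTop ∧
        ∀ i : ℕ,
          (B.ray (g i • x₀) α '' Set.Ici (0 : ℝ) ∩ Metric.closedBall y₀ M).Nonempty ∧
          (B.ray (g i • x₀) β '' Set.Ici (0 : ℝ) ∩ Metric.closedBall y₀ M).Nonempty) :
    IsScrambled B x₀ := by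
  obtain ⟨hiso, -, hcoc⟩ := hgeo
  obtain ⟨M, -, hM⟩ := hM
  intro α β hαβ
  refine ⟨limsup_bdist_pos hCAT hiso hcoc B x₀ hαβ, ?_⟩
  obtain ⟨g, y₀, hg, hmeet⟩ := hM α β hαβ
  have hinv := tendsto_inv_cofinite hg
  have h0 := tendsto_bdist_zero hCAT hiso B x₀ hg hmeet
  have : (Filter.cofinite : Filter G).NeBot := hinv.neBot
  have hge : Filter.IsBoundedUnder (· ≥ ·) Filter.cofinite
      (fun g : G => bdist B x₀ (g • α) (g • β)) :=
    Filter.isBoundedUnder_of ⟨0, fun g => bdist_nonneg B x₀ _ _⟩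
  have hle : Filter.IsBoundedUnder (· ≤ ·) Filter.cofinite
      (fun g : G => bdist B x₀ (g • α) (g • β)) :=
    Filter.isBoundedUnder_of ⟨1, fun g => bdist_le_one B x₀ _ _⟩
  refine le_antisymm (le_of_forall_pos_le_add fun ε hε => ?_) ?_
  · rw [zero_add]
    refine Filter.liminf_le_of_frequently_le ?_ hge
    exact hinv.frequently (h0.eventually (eventually_le_nhds hε)).frequently
  · exact Filter.le_liminf_of_le hle.isCoboundedUnder_ge
      (Filter.Eventually.of_forall fun g => bdist_nonneg B x₀ _ _)
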